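/- arXiv:2507.01324 — 6 statements merged into one kernel-verified Lean document; each statement's English description precedes it below -/
import Mathlib

section
/- The aggregation operator H is a contraction with modulus α with respect to the maximum norm: for all vectors r, r' ∈ ℝ^𝒜, max_{x∈𝒜} |(Hr)(x) − (Hr')(x)| ≤ α · max_{y∈𝒜} |r_y − r'_y|. -/
theorem avg_le_aux {ι : Type} [Fintype ι] (w a b : ι → ℝ) (c : ℝ) (hw : ∀ i, 0 ≤ w i)
    (hw1 : ∑ i, w i = 1) (h : ∀ i, a i ≤ b i + c) :
    ∑ i, w i * a i ≤ ∑ i, w i * b i + c := by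
  calc ∑ i, w i * a i ≤ ∑ i, w i * (b i + c) :=
        Finset.sum_le_sum fun i _ => mul_le_mul_of_nonneg_left (h i) (hw i)
    _ = ∑ i, w i * b i + c := by
        simp only [mul_add, Finset.sum_add_distrib]
        rw [← Finset.sum_mul, hw1, one_mul]

/-- The aggregation operator `H` is a contraction of modulus `α` in the maximum norm:
`max_x |(Hr)(x) − (Hr')(x)| ≤ α · max_y |r_y − r'_y|`. -/
theorem aggregation_operator_contraction
    (n : ℕ) [NeZero n] (C A : Type) [Fintype A] [Nonempty A]
    (U : Fin n → Finset C) (hU : ∀ i, (U i).Nonempty)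
    (α : ℝ) (hα0 : 0 < α) (hα1 : α < 1)
    (p g : Fin n → C → Fin n → ℝ)
    (hp : ∀ i, ∀ u ∈ U i, ∀ j, 0 ≤ p i u j)
    (hp1 : ∀ i, ∀ u ∈ U i, ∑ j, p i u j = 1)
    (d : A → Fin n → ℝ) (hd : ∀ x i, 0 ≤ d x i) (hd1 : ∀ x, ∑ i, d x i = 1)
    (φ : Fin n → A → ℝ) (hφ : ∀ j y, 0 ≤ φ j y) (hφ1 : ∀ j, ∑ y, φ j y = 1)
    (H : (A → ℝ) → A → ℝ)
    (hH : ∀ r x, H r x = ∑ i, d x i * (U i).inf' (hU i)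
      (fun u => ∑ j, p i u j * (g i u j + α * ∑ y, φ j y * r y)))
    (r r' : A → ℝ) :
    (Finset.univ.sup' Finset.univ_nonempty fun x => |H r x - H r' x|) ≤
      α * Finset.univ.sup' Finset.univ_nonempty fun y => |r y - r' y| := by
  have key : ∀ (s t : A → ℝ) (M : ℝ), (∀ y, s y ≤ t y + M) → ∀ x, H s x ≤ H t x + α * M := by
    intro s t M h x
    rw [hH, hH]
    refine avg_le_aux _ _ _ _ (hd x) (hd1 x) fun i => ?_
    obtain ⟨u, hu, hue⟩ := Finset.exists_mem_eq_inf' (hU i)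
      (fun u => ∑ j, p i u j * (g i u j + α * ∑ y, φ j y * t y))
    rw [hue]
    refine (Finset.inf'_le _ hu).trans ?_
    refine avg_le_aux _ _ _ _ (hp i u hu) (hp1 i u hu) fun j => ?_
    have h1 := mul_le_mul_of_nonneg_left (avg_le_aux _ _ _ _ (hφ j) (hφ1 j) h) hα0.le
    linarith
  have hM : ∀ y, |r y - r' y| ≤ Finset.univ.sup' Finset.univ_nonempty fun y => |r y - r' y| :=
    fun y => Finset.le_sup' (fun y => |r y - r' y|) (Finset.mem_univ y)
  refine Finset.sup'_le _ _ fun x _ => ?_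
  have h1 := key r r' _ (fun y => by have := (abs_le.1 (hM y)).2; exact sub_le_iff_le_add'.1 this) x
  have h2 := key r' r _ (fun y => by
    have := (abs_le.1 (hM y)).1
    exact sub_le_iff_le_add'.1 (by linarith)) x
  rw [abs_le]
  constructor <;> linarith
end

section
/- (Error Bound on Aggregation) Assume that for all x ∈ 𝒜 and i ∈ {1,…,n}, d_{xi} > 0 implies φ_{ix} > 0. Let ε = max_{x∈𝒜} max_{ i,j : φ_{ix}>0, φ_{jx}>0 } |J*(i) − J*(j)|, and let J̃(i) = Σ_{x∈𝒜} φ_{ix} r*_x. Then |J*(i) − J̃(i)| ≤ ε/(1−α) for every state i = 1,…,n. -/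
theorem avg_aux {ι : Type} [Fintype ι] (w f : ι → ℝ) (hw : ∀ i, 0 ≤ w i) (hw1 : ∑ i, w i = 1)
    (c B : ℝ) (h : ∀ i, 0 < w i → |c - f i| ≤ B) : |c - ∑ i, w i * f i| ≤ B := by
  have e : c - ∑ i, w i * f i = ∑ i, w i * (c - f i) := by
    simp only [mul_sub, Finset.sum_sub_distrib, ← Finset.sum_mul, hw1, one_mul]
  rw [e]
  calc |∑ i, w i * (c - f i)| ≤ ∑ i, |w i * (c - f i)| := Finset.abs_sum_le_sum_abs _ _
    _ ≤ ∑ i, w i * B := by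
        refine Finset.sum_le_sum fun i _ => ?_
        rw [abs_mul, abs_of_nonneg (hw i)]
        rcases (hw i).eq_or_lt with h0 | h0
        · simp [← h0]
        · exact mul_le_mul_of_nonneg_left (h i h0) h0.le
    _ = B := by rw [← Finset.sum_mul, hw1, one_mul]

theorem inf_aux {C : Type} (s : Finset C) (hs : s.Nonempty) (f g : C → ℝ) (B : ℝ)
    (h : ∀ u ∈ s, |f u - g u| ≤ B) : |s.inf' hs f - s.inf' hs g| ≤ B := by
  obtain ⟨a, ha, ea⟩ := Finset.exists_mem_eq_inf' hs f
  obtain ⟨b, hb, eb⟩ := Finset.exists_mem_eq_inf' hs g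
  have h1 := Finset.inf'_le f hb
  have h2 := Finset.inf'_le g ha
  have h3 := abs_le.1 (h a ha)
  have h4 := abs_le.1 (h b hb)
  rw [abs_le]
  constructor <;> linarith

/-- Error bound on aggregation: under the support condition
`d_{xi} > 0 ⟹ φ_{ix} > 0`, the aggregation approximation
`J̃(i) = Σ_x φ_{ix} r*_x` satisfies `|J*(i) − J̃(i)| ≤ ε/(1−α)`, where
`ε = max_{x} max_{i,j : φ_{ix}>0, φ_{jx}>0} |J*(i) − J*(j)|`. -/
theorem aggregation_error_bound
    (n : ℕ) [NeZero n] (C A : Type) [Fintype A] [Nonempty A]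
    (U : Fin n → Finset C) (hU : ∀ i, (U i).Nonempty)
    (α : ℝ) (hα0 : 0 < α) (hα1 : α < 1)
    (p g : Fin n → C → Fin n → ℝ)
    (hp : ∀ i, ∀ u ∈ U i, ∀ j, 0 ≤ p i u j)
    (hp1 : ∀ i, ∀ u ∈ U i, ∑ j, p i u j = 1)
    (d : A → Fin n → ℝ) (hd : ∀ x i, 0 ≤ d x i) (hd1 : ∀ x, ∑ i, d x i = 1)
    (φ : Fin n → A → ℝ) (hφ : ∀ j y, 0 ≤ φ j y) (hφ1 : ∀ j, ∑ y, φ j y = 1)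
    -- `J*` is the optimal cost vector of the original problem
    (Jstar : Fin n → ℝ)
    (hJstar : ∀ i, Jstar i = (U i).inf' (hU i)
      (fun u => ∑ j, p i u j * (g i u j + α * Jstar j)))
    -- `r*` is the (unique) fixed point of the aggregation operator `H`
    (rstar : A → ℝ)
    (hfix : ∀ x, rstar x = ∑ i, d x i * (U i).inf' (hU i)
      (fun u => ∑ j, p i u j * (g i u j + α * ∑ y, φ j y * rstar y)))
    -- the support condition
    (hcond : ∀ x i, 0 < d x i → 0 < φ i x)
    -- `ε = max_{x∈𝒜} max_{i,j : φ_{ix}>0, φ_{jx}>0} |J*(i) − J*(j)|`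
    (ε : ℝ)
    (hε : ε = Finset.univ.sup' Finset.univ_nonempty
      (fun q : A × Fin n × Fin n =>
        if 0 < φ q.2.1 q.1 ∧ 0 < φ q.2.2 q.1 then |Jstar q.2.1 - Jstar q.2.2| else 0))
    -- the aggregation approximation `J̃`
    (Jtilde : Fin n → ℝ)
    (hJtilde : ∀ i, Jtilde i = ∑ x, φ i x * rstar x) :
    ∀ i, |Jstar i - Jtilde i| ≤ ε / (1 - α) := by
  have hεle : ∀ x i j, 0 < φ i x → 0 < φ j x → |Jstar i - Jstar j| ≤ ε := by
    intro x i j hi hj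
    have := Finset.le_sup' (fun q : A × Fin n × Fin n =>
        if 0 < φ q.2.1 q.1 ∧ 0 < φ q.2.2 q.1 then |Jstar q.2.1 - Jstar q.2.2| else 0)
        (Finset.mem_univ (x, i, j))
    rw [← hε] at this
    simpa [hi, hj] using this
  obtain ⟨k, -, hk⟩ := Finset.exists_max_image Finset.univ (fun i => |Jstar i - Jtilde i|)
    (Finset.univ_nonempty (α := Fin n))
  set M := |Jstar k - Jtilde k| with hM
  simp only [← hJtilde] at hfix
  have hT : ∀ i, |Jstar i - (U i).inf' (hU i)
      (fun u => ∑ j, p i u j * (g i u j + α * Jtilde j))| ≤ α * M := by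
    intro i
    rw [hJstar i]
    refine inf_aux _ _ _ _ _ fun u hu => ?_
    rw [← Finset.sum_sub_distrib]
    calc |∑ j, (p i u j * (g i u j + α * Jstar j) - p i u j * (g i u j + α * Jtilde j))|
        ≤ ∑ j, |p i u j * (g i u j + α * Jstar j) - p i u j * (g i u j + α * Jtilde j)| :=
          Finset.abs_sum_le_sum_abs _ _
      _ ≤ ∑ j, p i u j * (α * M) := by
          refine Finset.sum_le_sum fun j _ => ?_
          have : p i u j * (g i u j + α * Jstar j) - p i u j * (g i u j + α * Jtilde j)
            = p i u j * (α * (Jstar j - Jtilde j)) := by ring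
          rw [this, abs_mul, abs_mul, abs_of_nonneg (hp i u hu j), abs_of_pos hα0]
          exact mul_le_mul_of_nonneg_left
            (mul_le_mul_of_nonneg_left (hk j (Finset.mem_univ j)) hα0.le) (hp i u hu j)
      _ = α * M := by rw [← Finset.sum_mul, hp1 i u hu, one_mul]
  have hr : ∀ j x, 0 < φ j x → |Jstar j - rstar x| ≤ ε + α * M := by
    intro j x hj
    rw [hfix x]
    refine avg_aux _ _ (hd x) (hd1 x) _ _ fun i hi => ?_
    exact (abs_sub_le _ (Jstar i) _).trans (add_le_add (hεle x j i hj (hcond x i hi)) (hT i))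
  have hMle : M ≤ ε + α * M := by
    have := avg_aux _ rstar (hφ k) (hφ1 k) (Jstar k) (ε + α * M) (fun x hx => hr k x hx)
    rwa [← hJtilde k] at this
  intro i
  rw [le_div_iff₀ (by linarith)]
  have := hk i (Finset.mem_univ i)
  have h2 : |Jstar i - Jtilde i| * (1 - α) ≤ M * (1 - α) :=
    mul_le_mul_of_nonneg_right this (by linarith)
  linarith
end

section
/- (Upper half of the error bound) Assume that for all x ∈ 𝒜 and i ∈ {1,…,n}, d_{xi} > 0 implies φ_{ix} > 0. Let ε = max_{x∈𝒜} max_{ i,j : φ_{ix}>0, φ_{jx}>0 } |J*(i) − J*(j)|, and let J̃(i) = Σ_{x∈𝒜} φ_{ix} r*_x. Then J̃(i) ≤ J*(i) + ε/(1−α) for every state i = 1,…,n. -/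
/-- Error bound on aggregation: under the support condition
`d_{xi} > 0 ⟹ φ_{ix} > 0`, the aggregation approximation
`J̃(i) = Σ_x φ_{ix} r*_x` satisfies `J̃(i) ≤ J*(i) + ε/(1−α)`, where
`ε = max_{x} max_{i,j : φ_{ix}>0, φ_{jx}>0} |J*(i) − J*(j)|`. -/
theorem aggregation_error_bound_upper
    (n : ℕ) [NeZero n] (C A : Type) [Fintype A] [Nonempty A]
    (U : Fin n → Finset C) (hU : ∀ i, (U i).Nonempty)
    (α : ℝ) (hα0 : 0 < α) (hα1 : α < 1)
    (p g : Fin n → C → Fin n → ℝ)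
    (hp : ∀ i, ∀ u ∈ U i, ∀ j, 0 ≤ p i u j)
    (hp1 : ∀ i, ∀ u ∈ U i, ∑ j, p i u j = 1)
    (d : A → Fin n → ℝ) (hd : ∀ x i, 0 ≤ d x i) (hd1 : ∀ x, ∑ i, d x i = 1)
    (φ : Fin n → A → ℝ) (hφ : ∀ j y, 0 ≤ φ j y) (hφ1 : ∀ j, ∑ y, φ j y = 1)
    -- `J*` is the optimal cost vector of the original problem
    (Jstar : Fin n → ℝ)
    (hJstar : ∀ i, Jstar i = (U i).inf' (hU i)
      (fun u => ∑ j, p i u j * (g i u j + α * Jstar j)))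
    -- `r*` is the (unique) fixed point of the aggregation operator `H`
    (rstar : A → ℝ)
    (hfix : ∀ x, rstar x = ∑ i, d x i * (U i).inf' (hU i)
      (fun u => ∑ j, p i u j * (g i u j + α * ∑ y, φ j y * rstar y)))
    -- the support condition
    (hcond : ∀ x i, 0 < d x i → 0 < φ i x)
    -- `ε = max_{x∈𝒜} max_{i,j : φ_{ix}>0, φ_{jx}>0} |J*(i) − J*(j)|`
    (ε : ℝ)
    (hε : ε = Finset.univ.sup' Finset.univ_nonempty
      (fun q : A × Fin n × Fin n =>
        if 0 < φ q.2.1 q.1 ∧ 0 < φ q.2.2 q.1 then |Jstar q.2.1 - Jstar q.2.2| else 0))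
    -- the aggregation approximation `J̃`
    (Jtilde : Fin n → ℝ)
    (hJtilde : ∀ i, Jtilde i = ∑ x, φ i x * rstar x) :
    ∀ i, Jtilde i ≤ Jstar i + ε / (1 - α) := by
  have hεle : ∀ x i j, 0 < φ i x → 0 < φ j x → Jstar i ≤ Jstar j + ε := by
    intro x i j hi hj
    have h := Finset.le_sup' (fun q : A × Fin n × Fin n =>
        if 0 < φ q.2.1 q.1 ∧ 0 < φ q.2.2 q.1 then |Jstar q.2.1 - Jstar q.2.2| else 0)
        (Finset.mem_univ (x, i, j))
    rw [← hε] at h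
    simp only [hi, hj, and_self, if_true] at h
    have := le_abs_self (Jstar i - Jstar j)
    linarith
  obtain ⟨i0, -, hi0⟩ := Finset.exists_max_image Finset.univ
    (fun i => Jtilde i - Jstar i) Finset.univ_nonempty
  obtain ⟨M, hM⟩ : ∃ M, M = Jtilde i0 - Jstar i0 := ⟨_, rfl⟩
  have hmax : ∀ i, Jtilde i ≤ Jstar i + M := by
    intro i
    have := hi0 i (Finset.mem_univ i)
    linarith
  have hT : ∀ i, (U i).inf' (hU i)
      (fun u => ∑ j, p i u j * (g i u j + α * ∑ y, φ j y * rstar y)) ≤ Jstar i + α * M := by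
    intro i
    obtain ⟨u, hu, hu2⟩ := Finset.exists_mem_eq_inf' (hU i)
      (fun u => ∑ j, p i u j * (g i u j + α * Jstar j))
    rw [hJstar i, hu2]
    refine (Finset.inf'_le _ hu).trans ?_
    have h1 : ∑ j, p i u j * (α * M) = α * M := by
      rw [← Finset.sum_mul, hp1 i u hu, one_mul]
    rw [← h1, ← Finset.sum_add_distrib]
    refine Finset.sum_le_sum fun j _ => ?_
    rw [← mul_add, ← hJtilde j]
    refine mul_le_mul_of_nonneg_left ?_ (hp i u hu j)
    have := mul_le_mul_of_nonneg_left (hmax j) hα0.le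
    linarith
  have hr : ∀ i x, 0 < φ i x → rstar x ≤ Jstar i + ε + α * M := by
    intro i x hx
    rw [hfix x]
    have h1 : ∑ k, d x k * (Jstar i + ε + α * M) = Jstar i + ε + α * M := by
      rw [← Finset.sum_mul, hd1 x, one_mul]
    rw [← h1]
    refine Finset.sum_le_sum fun k _ => ?_
    rcases (hd x k).eq_or_lt with h0 | h0
    · simp [← h0]
    · refine mul_le_mul_of_nonneg_left ?_ h0.le
      have := hεle x k i (hcond x k h0) hx
      have := hT k
      linarith
  have hJ : ∀ i, Jtilde i ≤ Jstar i + ε + α * M := by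
    intro i
    rw [hJtilde i]
    have h1 : ∑ x, φ i x * (Jstar i + ε + α * M) = Jstar i + ε + α * M := by
      rw [← Finset.sum_mul, hφ1 i, one_mul]
    rw [← h1]
    refine Finset.sum_le_sum fun x _ => ?_
    rcases (hφ i x).eq_or_lt with h0 | h0
    · simp [← h0]
    · exact mul_le_mul_of_nonneg_left (hr i x h0) h0.le
  have hMle : M ≤ ε / (1 - α) := by
    rw [le_div_iff₀ (by linarith)]
    have := hJ i0
    linarith
  intro i
  have := hmax i
  linarith
end

section
/- (Lower half of the error bound) Assume that for all x ∈ 𝒜 and i ∈ {1,…,n}, d_{xi} > 0 implies φ_{ix} > 0. Let ε = max_{x∈𝒜} max_{ i,j : φ_{ix}>0, φ_{jx}>0 } |J*(i) − J*(j)|, and let J̃(i) = Σ_{x∈𝒜} φ_{ix} r*_x. Then J̃(i) ≥ J*(i) − ε/(1−α) for every state i = 1,…,n. -/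
/-- Error bound on aggregation: under the support condition
`d_{xi} > 0 ⟹ φ_{ix} > 0`, the aggregation approximation
`J̃(i) = Σ_x φ_{ix} r*_x` satisfies `J̃(i) ≥ J*(i) − ε/(1−α)`, where
`ε = max_{x} max_{i,j : φ_{ix}>0, φ_{jx}>0} |J*(i) − J*(j)|`. -/
theorem aggregation_error_bound_lower
    (n : ℕ) [NeZero n] (C A : Type) [Fintype A] [Nonempty A]
    (U : Fin n → Finset C) (hU : ∀ i, (U i).Nonempty)
    (α : ℝ) (hα0 : 0 < α) (hα1 : α < 1)
    (p g : Fin n → C → Fin n → ℝ)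
    (hp : ∀ i, ∀ u ∈ U i, ∀ j, 0 ≤ p i u j)
    (hp1 : ∀ i, ∀ u ∈ U i, ∑ j, p i u j = 1)
    (d : A → Fin n → ℝ) (hd : ∀ x i, 0 ≤ d x i) (hd1 : ∀ x, ∑ i, d x i = 1)
    (φ : Fin n → A → ℝ) (hφ : ∀ j y, 0 ≤ φ j y) (hφ1 : ∀ j, ∑ y, φ j y = 1)
    -- `J*` is the optimal cost vector of the original problem
    (Jstar : Fin n → ℝ)
    (hJstar : ∀ i, Jstar i = (U i).inf' (hU i)
      (fun u => ∑ j, p i u j * (g i u j + α * Jstar j)))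
    -- `r*` is the (unique) fixed point of the aggregation operator `H`
    (rstar : A → ℝ)
    (hfix : ∀ x, rstar x = ∑ i, d x i * (U i).inf' (hU i)
      (fun u => ∑ j, p i u j * (g i u j + α * ∑ y, φ j y * rstar y)))
    -- the support condition
    (hcond : ∀ x i, 0 < d x i → 0 < φ i x)
    -- `ε = max_{x∈𝒜} max_{i,j : φ_{ix}>0, φ_{jx}>0} |J*(i) − J*(j)|`
    (ε : ℝ)
    (hε : ε = Finset.univ.sup' Finset.univ_nonempty
      (fun q : A × Fin n × Fin n =>
        if 0 < φ q.2.1 q.1 ∧ 0 < φ q.2.2 q.1 then |Jstar q.2.1 - Jstar q.2.2| else 0))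
    -- the aggregation approximation `J̃`
    (Jtilde : Fin n → ℝ)
    (hJtilde : ∀ i, Jtilde i = ∑ x, φ i x * rstar x) :
    ∀ i, Jstar i - ε / (1 - α) ≤ Jtilde i := by
  obtain ⟨k, -, hk⟩ := Finset.exists_max_image Finset.univ
    (fun i => Jstar i - Jtilde i) ⟨0, Finset.mem_univ _⟩
  set m := Jstar k - Jtilde k with hm
  have hmax : ∀ i, Jstar i - m ≤ Jtilde i := by
    intro i
    have h : Jstar i - Jtilde i ≤ Jstar k - Jtilde k := hk i (Finset.mem_univ _)
    linarith
  have hinf : ∀ i, Jstar i - α * m ≤ (U i).inf' (hU i)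
      (fun u => ∑ j, p i u j * (g i u j + α * ∑ y, φ j y * rstar y)) := by
    intro i
    apply Finset.le_inf'
    intro u hu
    have h1 : Jstar i ≤ ∑ j, p i u j * (g i u j + α * Jstar j) := by
      rw [hJstar i]
      exact Finset.inf'_le (fun u => ∑ j, p i u j * (g i u j + α * Jstar j)) hu
    have h2 : ∑ j, (p i u j * (g i u j + α * Jstar j) - p i u j * (α * m)) ≤
        ∑ j, p i u j * (g i u j + α * ∑ y, φ j y * rstar y) := by
      apply Finset.sum_le_sum
      intro j _
      rw [← hJtilde j, ← mul_sub]
      apply mul_le_mul_of_nonneg_left _ (hp i u hu j)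
      have := mul_le_mul_of_nonneg_left (hmax j) hα0.le
      linarith
    rw [Finset.sum_sub_distrib, ← Finset.sum_mul, hp1 i u hu] at h2
    linarith
  have heps : ∀ x i j, 0 < φ i x → 0 < φ j x → |Jstar i - Jstar j| ≤ ε := by
    intro x i j hi hj
    have h := Finset.le_sup' (fun q : A × Fin n × Fin n =>
        if 0 < φ q.2.1 q.1 ∧ 0 < φ q.2.2 q.1 then |Jstar q.2.1 - Jstar q.2.2| else 0)
        (Finset.mem_univ (x, i, j))
    rw [← hε] at h
    simpa [hi, hj] using h
  have hr : ∀ x, 0 < φ k x → Jstar k - ε - α * m ≤ rstar x := by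
    intro x hx
    have h : ∑ i, d x i * (Jstar k - ε - α * m) ≤ rstar x := by
      rw [hfix x]
      apply Finset.sum_le_sum
      intro i _
      rcases (hd x i).eq_or_lt with h0 | h0
      · rw [← h0]; simp
      · apply mul_le_mul_of_nonneg_left _ h0.le
        have h3 := (abs_le.1 (heps x k i hx (hcond x i h0))).2
        have h4 := hinf i
        linarith
    rwa [← Finset.sum_mul, hd1, one_mul] at h
  have hJ : Jstar k - ε - α * m ≤ Jtilde k := by
    have h : ∑ x, φ k x * (Jstar k - ε - α * m) ≤ Jtilde k := by
      rw [hJtilde k]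
      apply Finset.sum_le_sum
      intro x _
      rcases (hφ k x).eq_or_lt with h0 | h0
      · rw [← h0]; simp
      · exact mul_le_mul_of_nonneg_left (hr x h0) h0.le
    rwa [← Finset.sum_mul, hφ1, one_mul] at h
  have hfin : m ≤ ε / (1 - α) := by
    rw [le_div_iff₀ (by linarith)]
    linarith
  intro i
  have := hmax i
  linarith
end

section
/- Assume that for all x ∈ 𝒜 and i ∈ {1,…,n}, d_{xi} > 0 implies φ_{ix} > 0, and that for every x ∈ 𝒜 there exists at least one i with φ_{ix} > 0. Let ε = max_{x∈𝒜} max_{ i,j : φ_{ix}>0, φ_{jx}>0 } |J*(i) − J*(j)|, and define the vector r̄ ∈ ℝ^𝒜 by r̄_x = min_{ i : φ_{ix}>0 } J*(i) + ε/(1−α). Then (H r̄)(x) ≤ r̄_x for every x ∈ 𝒜. -/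
/-- If `d_{xi} > 0 ⟹ φ_{ix} > 0` and each aggregate state has nonempty footprint,
then the vector `r̄` with `r̄_x = min_{i : φ_{ix}>0} J*(i) + ε/(1−α)` satisfies
`(H r̄)(x) ≤ r̄_x` for every aggregate state `x`. -/
theorem aggregation_upper_vector_is_superharmonic
    (n : ℕ) [NeZero n] (C A : Type) [Fintype A] [Nonempty A]
    (U : Fin n → Finset C) (hU : ∀ i, (U i).Nonempty)
    (α : ℝ) (hα0 : 0 < α) (hα1 : α < 1)
    (p g : Fin n → C → Fin n → ℝ)
    (hp : ∀ i, ∀ u ∈ U i, ∀ j, 0 ≤ p i u j)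
    (hp1 : ∀ i, ∀ u ∈ U i, ∑ j, p i u j = 1)
    (d : A → Fin n → ℝ) (hd : ∀ x i, 0 ≤ d x i) (hd1 : ∀ x, ∑ i, d x i = 1)
    (φ : Fin n → A → ℝ) (hφ : ∀ j y, 0 ≤ φ j y) (hφ1 : ∀ j, ∑ y, φ j y = 1)
    -- `J*` is the optimal cost vector of the original problem
    (Jstar : Fin n → ℝ)
    (hJstar : ∀ i, Jstar i = (U i).inf' (hU i)
      (fun u => ∑ j, p i u j * (g i u j + α * Jstar j)))
    -- the aggregation operator `H`
    (H : (A → ℝ) → A → ℝ)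
    (hH : ∀ r x, H r x = ∑ i, d x i * (U i).inf' (hU i)
      (fun u => ∑ j, p i u j * (g i u j + α * ∑ y, φ j y * r y)))
    -- the support condition
    (hcond : ∀ x i, 0 < d x i → 0 < φ i x)
    -- every aggregate state has at least one state in its footprint
    (hsupp : ∀ x : A, ∃ i, 0 < φ i x)
    -- `ε = max_{x∈𝒜} max_{i,j : φ_{ix}>0, φ_{jx}>0} |J*(i) − J*(j)|`
    (ε : ℝ)
    (hε : ε = Finset.univ.sup' Finset.univ_nonempty
      (fun q : A × Fin n × Fin n =>
        if 0 < φ q.2.1 q.1 ∧ 0 < φ q.2.2 q.1 then |Jstar q.2.1 - Jstar q.2.2| else 0))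
    -- `r̄_x = min_{i : φ_{ix}>0} J*(i) + ε/(1−α)`
    (rbar : A → ℝ)
    (hrbar : ∀ x, rbar x =
      (Finset.univ.filter fun i => 0 < φ i x).inf'
        (by obtain ⟨i, hi⟩ := hsupp x
            exact ⟨i, Finset.mem_filter.2 ⟨Finset.mem_univ i, hi⟩⟩) Jstar
      + ε / (1 - α)) :
    ∀ x, H rbar x ≤ rbar x := by
  have hle : ∀ x i j, 0 < φ i x → 0 < φ j x → Jstar i ≤ Jstar j + ε := by
    intro x i j hi hj
    have h := Finset.le_sup' (fun q : A × Fin n × Fin n =>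
        if 0 < φ q.2.1 q.1 ∧ 0 < φ q.2.2 q.1 then |Jstar q.2.1 - Jstar q.2.2| else 0)
        (Finset.mem_univ (x, i, j))
    rw [← hε] at h
    simp only [hi, hj, and_self, if_true] at h
    linarith [le_abs_self (Jstar i - Jstar j)]
  have hK : ε + α * (ε / (1 - α)) = ε / (1 - α) := by
    have : (1 - α) ≠ 0 := by linarith
    field_simp
    ring
  generalize ε / (1 - α) = K at hK hrbar
  have h1 : ∀ j, ∑ y, φ j y * rbar y ≤ Jstar j + K := by
    intro j
    calc ∑ y, φ j y * rbar y ≤ ∑ y, φ j y * (Jstar j + K) := by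
          apply Finset.sum_le_sum
          intro y _
          rcases (hφ j y).eq_or_lt with h | h
          · simp [← h]
          · apply mul_le_mul_of_nonneg_left _ h.le
            rw [hrbar y]
            have := Finset.inf'_le (s := Finset.univ.filter fun i => 0 < φ i y) Jstar
              (Finset.mem_filter.2 ⟨Finset.mem_univ j, h⟩)
            linarith
      _ = Jstar j + K := by rw [← Finset.sum_mul, hφ1, one_mul]
  have h2 : ∀ i, (U i).inf' (hU i)
      (fun u => ∑ j, p i u j * (g i u j + α * ∑ y, φ j y * rbar y)) ≤ Jstar i + α * K := by
    intro i
    obtain ⟨u, hu, hue⟩ := Finset.exists_mem_eq_inf' (hU i)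
      (fun u => ∑ j, p i u j * (g i u j + α * Jstar j))
    rw [hJstar i, hue]
    refine (Finset.inf'_le _ hu).trans ?_
    calc ∑ j, p i u j * (g i u j + α * ∑ y, φ j y * rbar y)
        ≤ ∑ j, (p i u j * (g i u j + α * Jstar j) + p i u j * (α * K)) := by
          apply Finset.sum_le_sum
          intro j _
          rw [← mul_add]
          apply mul_le_mul_of_nonneg_left _ (hp i u hu j)
          have := mul_le_mul_of_nonneg_left (h1 j) hα0.le
          linarith
      _ = _ := by rw [Finset.sum_add_distrib, ← Finset.sum_mul, hp1 i u hu, one_mul]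
  intro x
  rw [hH]
  calc _ ≤ ∑ i, d x i * rbar x := by
        apply Finset.sum_le_sum
        intro i _
        rcases (hd x i).eq_or_lt with h | h
        · simp [← h]
        · apply mul_le_mul_of_nonneg_left _ h.le
          refine (h2 i).trans ?_
          rw [hrbar x]
          have : Jstar i - ε ≤ (Finset.univ.filter fun i => 0 < φ i x).inf'
              (by obtain ⟨i, hi⟩ := hsupp x
                  exact ⟨i, Finset.mem_filter.2 ⟨Finset.mem_univ i, hi⟩⟩) Jstar := by
            apply Finset.le_inf'
            intro j hj
            linarith [hle x i j (hcond x i h) (Finset.mem_filter.1 hj).2]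
          linarith
    _ = rbar x := by rw [← Finset.sum_mul, hd1, one_mul]
end

section
/- Assume that for all x ∈ 𝒜 and i ∈ {1,…,n}, d_{xi} > 0 implies φ_{ix} > 0, and that for every x ∈ 𝒜 there exists at least one i with φ_{ix} > 0. Let ε = max_{x∈𝒜} max_{ i,j : φ_{ix}>0, φ_{jx}>0 } |J*(i) − J*(j)|, and define the vector r̲ ∈ ℝ^𝒜 by r̲_x = max_{ i : φ_{ix}>0 } J*(i) − ε/(1−α). Then (H r̲)(x) ≥ r̲_x for every x ∈ 𝒜. -/
/-- If `d_{xi} > 0 ⟹ φ_{ix} > 0` and each aggregate state has nonempty footprint,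
then the vector `r̲` with `r̲_x = max_{i : φ_{ix}>0} J*(i) − ε/(1−α)` satisfies
`(H r̲)(x) ≥ r̲_x` for every aggregate state `x`. -/
theorem aggregation_lower_vector_is_subharmonic
    (n : ℕ) [NeZero n] (C A : Type) [Fintype A] [Nonempty A]
    (U : Fin n → Finset C) (hU : ∀ i, (U i).Nonempty)
    (α : ℝ) (hα0 : 0 < α) (hα1 : α < 1)
    (p g : Fin n → C → Fin n → ℝ)
    (hp : ∀ i, ∀ u ∈ U i, ∀ j, 0 ≤ p i u j)
    (hp1 : ∀ i, ∀ u ∈ U i, ∑ j, p i u j = 1)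
    (d : A → Fin n → ℝ) (hd : ∀ x i, 0 ≤ d x i) (hd1 : ∀ x, ∑ i, d x i = 1)
    (φ : Fin n → A → ℝ) (hφ : ∀ j y, 0 ≤ φ j y) (hφ1 : ∀ j, ∑ y, φ j y = 1)
    -- `J*` is the optimal cost vector of the original problem
    (Jstar : Fin n → ℝ)
    (hJstar : ∀ i, Jstar i = (U i).inf' (hU i)
      (fun u => ∑ j, p i u j * (g i u j + α * Jstar j)))
    -- the aggregation operator `H`
    (H : (A → ℝ) → A → ℝ)
    (hH : ∀ r x, H r x = ∑ i, d x i * (U i).inf' (hU i)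
      (fun u => ∑ j, p i u j * (g i u j + α * ∑ y, φ j y * r y)))
    -- the support condition
    (hcond : ∀ x i, 0 < d x i → 0 < φ i x)
    -- every aggregate state has at least one state in its footprint
    (hsupp : ∀ x : A, ∃ i, 0 < φ i x)
    -- `ε = max_{x∈𝒜} max_{i,j : φ_{ix}>0, φ_{jx}>0} |J*(i) − J*(j)|`
    (ε : ℝ)
    (hε : ε = Finset.univ.sup' Finset.univ_nonempty
      (fun q : A × Fin n × Fin n =>
        if 0 < φ q.2.1 q.1 ∧ 0 < φ q.2.2 q.1 then |Jstar q.2.1 - Jstar q.2.2| else 0))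
    -- `r̲_x = max_{i : φ_{ix}>0} J*(i) − ε/(1−α)`
    (rlow : A → ℝ)
    (hrlow : ∀ x, rlow x =
      (Finset.univ.filter fun i => 0 < φ i x).sup'
        (by obtain ⟨i, hi⟩ := hsupp x
            exact ⟨i, Finset.mem_filter.2 ⟨Finset.mem_univ i, hi⟩⟩) Jstar
      - ε / (1 - α)) :
    ∀ x, rlow x ≤ H rlow x := by
  have hK : ε / (1 - α) * (1 - α) = ε := div_mul_cancel₀ _ (by linarith)
  set K := ε / (1 - α) with hKdef
  have h1 : ∀ j y, 0 < φ j y → Jstar j - K ≤ rlow y := by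
    intro j y h
    rw [hrlow y]
    have := Finset.le_sup' (s := Finset.univ.filter fun i => 0 < φ i y) Jstar
      (Finset.mem_filter.2 ⟨Finset.mem_univ j, h⟩)
    linarith
  have h2 : ∀ j, Jstar j - K ≤ ∑ y, φ j y * rlow y := by
    intro j
    calc Jstar j - K = ∑ y, φ j y * (Jstar j - K) := by
          rw [← Finset.sum_mul, hφ1, one_mul]
      _ ≤ _ := by
          refine Finset.sum_le_sum fun y _ => ?_
          rcases (hφ j y).eq_or_lt with h | h
          · simp [← h]
          · exact mul_le_mul_of_nonneg_left (h1 j y h) h.le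
  have h3 : ∀ i, Jstar i - α * K ≤ (U i).inf' (hU i)
      (fun u => ∑ j, p i u j * (g i u j + α * ∑ y, φ j y * rlow y)) := by
    intro i
    refine Finset.le_inf' _ _ fun u hu => ?_
    have ha : Jstar i ≤ ∑ j, p i u j * (g i u j + α * Jstar j) := by
      rw [hJstar i]
      exact Finset.inf'_le (fun u => ∑ j, p i u j * (g i u j + α * Jstar j)) hu
    have hb : ∑ j, p i u j * (g i u j + α * Jstar j) - α * K
        = ∑ j, p i u j * (g i u j + α * (Jstar j - K)) := by
      have : α * K = ∑ j, p i u j * (α * K) := by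
        rw [← Finset.sum_mul, hp1 i u hu, one_mul]
      rw [this, ← Finset.sum_sub_distrib]
      exact Finset.sum_congr rfl fun j _ => by ring
    have hc : ∑ j, p i u j * (g i u j + α * (Jstar j - K))
        ≤ ∑ j, p i u j * (g i u j + α * ∑ y, φ j y * rlow y) := by
      refine Finset.sum_le_sum fun j _ => mul_le_mul_of_nonneg_left ?_ (hp i u hu j)
      have := mul_le_mul_of_nonneg_left (h2 j) hα0.le
      linarith
    linarith
  intro x
  have h4 : ∀ i, 0 < φ i x → rlow x ≤ Jstar i - α * K := by
    intro i hi
    have : (Finset.univ.filter fun i => 0 < φ i x).sup'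
        (by obtain ⟨i, hi⟩ := hsupp x
            exact ⟨i, Finset.mem_filter.2 ⟨Finset.mem_univ i, hi⟩⟩) Jstar ≤ Jstar i + ε := by
      refine Finset.sup'_le _ _ fun j hj => ?_
      have hj' := (Finset.mem_filter.1 hj).2
      have h := Finset.le_sup' (fun q : A × Fin n × Fin n =>
        if 0 < φ q.2.1 q.1 ∧ 0 < φ q.2.2 q.1 then |Jstar q.2.1 - Jstar q.2.2| else 0)
        (Finset.mem_univ (x, j, i))
      rw [← hε] at h
      simp only [hj', hi, and_self, if_true] at h
      have := le_abs_self (Jstar j - Jstar i)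
      linarith
    rw [hrlow x]
    linarith
  rw [hH]
  calc rlow x = ∑ i, d x i * rlow x := by rw [← Finset.sum_mul, hd1, one_mul]
    _ ≤ _ := by
      refine Finset.sum_le_sum fun i _ => ?_
      rcases (hd x i).eq_or_lt with h | h
      · simp [← h]
      · exact mul_le_mul_of_nonneg_left ((h4 i (hcond x i h)).trans (h3 i)) h.le
end
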